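/- arXiv:2207.08066 — 5 statements merged into one kernel-verified Lean document; each statement's English description precedes it below -/
import Mathlib

section
/- Let L ≥ 1 and let η ∈ S_L (so M = 0). Then T_L(η) ∈ S_L; in particular 0 ≤ (T_L(η))_j ≤ L for all j, (T_L(η))_0 = 0, (T_L(η))_j = 0 for all sufficiently large j, ∑_{j=0}^{i}(L − (T_L(η))_j) ≥ ∑_{j=0}^{i+1} (T_L(η))_j for every i ≥ 0, and moreover ∑_{j=0}^{∞} (T_L(η))_j = ∑_{j=0}^{∞} η_j. -/
namespace BBS

attribute [local instance] Classical.propDecidable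

noncomputable section

/-- Carrier sequence with initial load `m` for box capacity `L`. -/
def carrierM (L m : ℤ) (η : ℕ → ℤ) : ℕ → ℤ
  | 0 => m
  | j + 1 => η j + max 0 (η j + carrierM L m η j - L)

/-- Carrier sequence (initial load `0`). -/
def carrier (L : ℤ) (η : ℕ → ℤ) : ℕ → ℤ := carrierM L 0 η

/-- Time evolution `T_L`. -/
def evol (L : ℤ) (η : ℕ → ℤ) (j : ℕ) : ℤ := min (L - η j) (carrier L η j)

/-- Time evolution `T_1^m` on binary sequences. -/
def evolOne (m : ℤ) (w : ℕ → ℤ) (j : ℕ) : ℤ := min (1 - w j) (carrierM 1 m w j)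

/-- Membership in `S_{L,M}`. -/
def mem_S (L M : ℤ) (η : ℕ → ℤ) : Prop :=
  (∃ N : ℕ, ∀ j, N ≤ j → η j = 0) ∧
  (∀ j, -M ≤ η j ∧ η j ≤ L + M) ∧
  η 0 ≤ 0 ∧
  (∀ j, max (-η j) (η j - L) ≤ M) ∧
  (∃ j, max (-η j) (η j - L) = M) ∧
  (∀ i : ℕ, ∑ j ∈ Finset.range (i + 2), η j ≤ ∑ j ∈ Finset.range (i + 1), (L - η j))

/-- Auxiliary sequence for the backward carrier. -/
def backAux (L : ℤ) (η : ℕ → ℤ) (x : ℕ) : ℕ → ℤ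
  | 0 => 0
  | n + 1 => η (x - n - 1) + max 0 (η (x - n - 1) + backAux L η x n - L)

/-- Backward carrier `ū` computed from the index `x`. -/
def backCarrier (L : ℤ) (η : ℕ → ℤ) (x j : ℕ) : ℤ :=
  if x ≤ j then 0 else backAux L η x (x - j)

/-- Reverse time evolution `R_L` computed from the index `x`. -/
def revol (L : ℤ) (η : ℕ → ℤ) (x j : ℕ) : ℤ :=
  if j < x then min (L - η j) (backCarrier L η x (j + 1)) else 0

/-- The concatenated word sequence `r_K(η)`. -/
def rSeq (L M : ℕ) (K : Set ℕ) (η : ℕ → ℤ) (n : ℕ) : ℤ :=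
  if (n / (L + 2 * M) ∈ K ∧ ((n % (L + 2 * M) : ℕ) : ℤ) < η (n / (L + 2 * M)) + M) ∨
      (n / (L + 2 * M) ∉ K ∧
        (L : ℤ) + 2 * M - (η (n / (L + 2 * M)) + M) ≤ ((n % (L + 2 * M) : ℕ) : ℤ))
  then 1 else 0

/-- The concatenated word sequence `l_K(η)`. -/
def lSeq (L M : ℕ) (K : Set ℕ) (η : ℕ → ℤ) (n : ℕ) : ℤ :=
  if (n / (L + 2 * M) ∈ K ∧
        (L : ℤ) + 2 * M - (η (n / (L + 2 * M)) + M) ≤ ((n % (L + 2 * M) : ℕ) : ℤ)) ∨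
      (n / (L + 2 * M) ∉ K ∧ ((n % (L + 2 * M) : ℕ) : ℤ) < η (n / (L + 2 * M)) + M)
  then 1 else 0

/-- Soliton flag sequence `a(η)`. -/
def flag (L : ℤ) (η : ℕ → ℤ) : ℕ → ℤ
  | 0 => 0
  | j + 1 =>
    if η j + η (j + 1) < L then 0
    else if η j + η (j + 1) = L then flag L η j else 1

/-- Primed soliton flag sequence `a′(η)` (with the convention `a′_{-1} = 0`). -/
def flag' (L : ℤ) (η : ℕ → ℤ) : ℕ → ℤ
  | 0 => if η 0 + η 1 < L then 0 else if η 0 + η 1 = L then 0 else 1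
  | j + 1 =>
    if η (j + 1) + η (j + 2) < L then 0
    else if η (j + 1) + η (j + 2) = L then flag' L η j else 1

/-- `I(η)`: right ends of contiguous 1-segments. -/
def Iset (L : ℤ) (η : ℕ → ℤ) : Set ℕ := {j | flag L η j = 1 ∧ flag L η (j + 1) = 0}

/-- `I′(η)`: left ends of contiguous right-1-segments. -/
def Iset' (L : ℤ) (η : ℕ → ℤ) : Set ℕ :=
  {j | (∀ k, j = k + 1 → flag' L η k = 0) ∧ flag' L η j = 1}

def marked (L : ℤ) (η : ℕ → ℤ) (j : ℕ) : Prop := j ∈ Iset L η ∨ j + 1 ∈ Iset L η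

def marked' (L : ℤ) (η : ℕ → ℤ) (j : ℕ) : Prop :=
  j ∈ Iset' L η ∨ ∃ k, j = k + 1 ∧ k ∈ Iset' L η

/-- Arc-count sequence `b̃(η)`. -/
def btilde (L M : ℕ) (η : ℕ → ℤ) (j : ℕ) : ℤ :=
  if marked (L : ℤ) η j then 0
  else min (η j + M) ((L : ℤ) + 2 * M - (η (j + 1) + M))

/-- `b̃_{j-1}` with the convention `b̃_{-1} = 0`. -/
def bprev (L M : ℕ) (η : ℕ → ℤ) : ℕ → ℤ
  | 0 => 0
  | j + 1 => btilde L M η j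

/-- Primed arc-count sequence `b̃′(η)`. -/
def btilde' (L M : ℕ) (η : ℕ → ℤ) : ℕ → ℤ
  | 0 => if marked' (L : ℤ) η 0 then 0 else η 0 + M
  | j + 1 =>
    if marked' (L : ℤ) η (j + 1) then 0
    else min (η (j + 1) + M) ((L : ℤ) + 2 * M - (η j + M))

/-- Background sequence `c(η)`: subsequence of `b̃` on unmarked indices, lowered by `M`. -/
def bg (L M : ℕ) (η : ℕ → ℤ) (j : ℕ) : ℤ :=
  btilde L M η (Nat.nth (fun i => ¬ marked (L : ℤ) η i) j) - M

/-- Primed background sequence `c′(η)`. -/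
def bg' (L M : ℕ) (η : ℕ → ℤ) (j : ℕ) : ℤ :=
  btilde' L M η (Nat.nth (fun i => ¬ marked' (L : ℤ) η i) j) - M

/-- Length of the word corresponding to box `j` in `d̃(η)`. -/
def wordLen (L M : ℕ) (η : ℕ → ℤ) (j : ℕ) : ℕ :=
  if j ∈ Iset (L : ℤ) η then L + 2 * M
  else ((L : ℤ) + 2 * M - bprev L M η j - btilde L M η j).toNat

def wordStart (L M : ℕ) (η : ℕ → ℤ) (j : ℕ) : ℕ :=
  ∑ k ∈ Finset.range j, wordLen L M η k

/-- Raised soliton word sequence `d̃(η)`. -/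
def dTilde (L M : ℕ) (η : ℕ → ℤ) (n : ℕ) : ℤ :=
  if ∃ j, wordStart L M η j ≤ n ∧ n < wordStart L M η (j + 1) ∧
      ((j ∈ Iset (L : ℤ) η ∧ ((n - wordStart L M η j : ℕ) : ℤ) < η j + M) ∨
        (j ∉ Iset (L : ℤ) η ∧
          (L : ℤ) + 2 * M - (η j + M) - bprev L M η j ≤ ((n - wordStart L M η j : ℕ) : ℤ)))
  then 1 else 0

/-- Length of the word corresponding to box `j` in `d̃′(η)`. -/
def wordLen' (L M : ℕ) (η : ℕ → ℤ) (j : ℕ) : ℕ :=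
  if j ∈ Iset' (L : ℤ) η then L + 2 * M
  else ((L : ℤ) + 2 * M - btilde' L M η j - btilde' L M η (j + 1)).toNat

def wordStart' (L M : ℕ) (η : ℕ → ℤ) (j : ℕ) : ℕ :=
  ∑ k ∈ Finset.range j, wordLen' L M η k

/-- Primed raised soliton word sequence `d̃′(η)`. -/
def dTilde' (L M : ℕ) (η : ℕ → ℤ) (n : ℕ) : ℤ :=
  if ∃ j, wordStart' L M η j ≤ n ∧ n < wordStart' L M η (j + 1) ∧
      ((j ∈ Iset' (L : ℤ) η ∧
          (L : ℤ) + 2 * M - (η j + M) ≤ ((n - wordStart' L M η j : ℕ) : ℤ)) ∨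
        (j ∉ Iset' (L : ℤ) η ∧
          ((n - wordStart' L M η j : ℕ) : ℤ) < η j + M - btilde' L M η j))
  then 1 else 0

/-- The sequence `0^{s 1}1^{t 1}0^{s 2}1^{t 2}⋯0^{s N}1^{t N}0^∞`. -/
def runSeq (N : ℕ) (s t : ℕ → ℕ) (n : ℕ) : ℤ :=
  if ∃ m, 1 ≤ m ∧ m ≤ N ∧
      (∑ k ∈ Finset.Icc 1 (m - 1), (s k + t k)) + s m ≤ n ∧
      n < ∑ k ∈ Finset.Icc 1 m, (s k + t k)
  then 1 else 0

/-- `w = 0^{s 1}1^{t 1}⋯1^{t N}0^∞` is the (maximal) run decomposition of `w`. -/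
def IsRunDecomp (N : ℕ) (s t : ℕ → ℕ) (w : ℕ → ℤ) : Prop :=
  (∀ m, 1 ≤ m → m ≤ N → 1 ≤ t m) ∧ (∀ m, 2 ≤ m → m ≤ N → 1 ≤ s m) ∧ w = runSeq N s t

def shrinkS (M : ℕ) (s : ℕ → ℕ) (m : ℕ) : ℕ := if m = 1 then s 1 - M else s m - 2 * M

def shrinkT (M : ℕ) (t : ℕ → ℕ) (m : ℕ) : ℕ := t m - 2 * M

/-- `d` is the soliton sequence `d(η)`. -/
def IsSolitonSeq (L M : ℕ) (η : ℕ → ℤ) (d : ℕ → ℤ) : Prop :=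
  ∃ N s t, IsRunDecomp N s t (dTilde L M η) ∧ d = runSeq N (shrinkS M s) (shrinkT M t)

/-- `d` is the primed soliton sequence `d′(η)`. -/
def IsSolitonSeq' (L M : ℕ) (η : ℕ → ℤ) (d : ℕ → ℤ) : Prop :=
  ∃ N s t, IsRunDecomp N s t (dTilde' L M η) ∧ d = runSeq N (shrinkS M s) (shrinkT M t)

/-- Forward shift `Λ`. -/
def lam (c : ℕ → ℤ) : ℕ → ℤ
  | 0 => 0
  | j + 1 => c j

/-- Membership in the background space `S^{(b)}_{L,M}`. -/
def mem_Sb (L M : ℤ) (c : ℕ → ℤ) : Prop := mem_S L M c ∧ ∀ j, c j + c (j + 1) ≤ L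

/-- Membership in the soliton space `S^{(f)}_L`: a binary sequence with finitely many
ones all of whose maximal runs of equal letters have length greater than `L`. -/
def mem_Sf (L : ℕ) (w : ℕ → ℤ) : Prop :=
  (∀ n, w n = 0 ∨ w n = 1) ∧ (∃ N : ℕ, ∀ n, N ≤ n → w n = 0) ∧
  ∀ n m : ℕ, n ≤ m → (∀ j, n ≤ j → j ≤ m → w j = w n) →
    (n = 0 ∨ w (n - 1) ≠ w n) → w (m + 1) ≠ w m → L < m + 1 - n

/-- Stages of the iterative arc-pairing construction: at each stage, connect every pair
`i < j` of yet-unpaired positions with `w i = a`, `w j = b` such that every position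
strictly between them is already paired. -/
def arcStage (a b : ℤ) (w : ℕ → ℤ) : ℕ → Set (ℕ × ℕ)
  | 0 => ∅
  | k + 1 => arcStage a b w k ∪
      {p : ℕ × ℕ | p.1 < p.2 ∧ w p.1 = a ∧ w p.2 = b ∧
        (∀ q ∈ arcStage a b w k, p.1 ≠ q.1 ∧ p.1 ≠ q.2 ∧ p.2 ≠ q.1 ∧ p.2 ≠ q.2) ∧
        (∀ m, p.1 < m → m < p.2 → ∃ q ∈ arcStage a b w k, m = q.1 ∨ m = q.2)}

/-- The arc pairing: `arcPairing 1 0 w` is the 10-arc pairing of `w`, and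
`arcPairing 0 1 w` is the 01-arc pairing of `w`. -/
def arcPairing (a b : ℤ) (w : ℕ → ℤ) : Set (ℕ × ℕ) := ⋃ k, arcStage a b w k

/-- Extension of `η` to integer indices with `η_j = L` for `j < 0`. -/
def etaExt (L : ℕ) (η : ℕ → ℤ) (j : ℤ) : ℤ := if j < 0 then (L : ℤ) else η j.toNat

end

end BBS

open BBS

theorem carrier_step (L : ℤ) (η : ℕ → ℤ) (j : ℕ) :
    carrier L η (j + 1) = η j + carrier L η j - evol L η j := by
  have h : carrier L η (j + 1) = η j + max 0 (η j + carrier L η j - L) := rfl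
  rw [h]
  unfold evol
  omega

theorem carrier_sum (L : ℤ) (η : ℕ → ℤ) (n : ℕ) :
    ∑ j ∈ Finset.range n, evol L η j + carrier L η n = ∑ j ∈ Finset.range n, η j := by
  induction n with
  | zero => simp [carrier, carrierM]
  | succ n ih =>
    rw [Finset.sum_range_succ, Finset.sum_range_succ, carrier_step]
    linarith

theorem carrier_nonneg (L : ℤ) (η : ℕ → ℤ) (h0 : ∀ j, 0 ≤ η j) (n : ℕ) :
    0 ≤ carrier L η n := by
  cases n with
  | zero => exact le_refl 0
  | succ n =>
    have h : carrier L η (n + 1) = η n + max 0 (η n + carrier L η n - L) := rfl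
    have := h0 n
    omega

theorem carrier_tail (L : ℤ) (hL : 1 ≤ L) (η : ℕ → ℤ) (h0 : ∀ j, 0 ≤ η j)
    (N : ℕ) (hN : ∀ j, N ≤ j → η j = 0) (k : ℕ) :
    carrier L η (N + k) ≤ max 0 (carrier L η N - k) := by
  induction k with
  | zero => simp
  | succ k ih =>
    have h : carrier L η (N + (k + 1)) =
        η (N + k) + max 0 (η (N + k) + carrier L η (N + k) - L) := rfl
    have h1 := hN (N + k) (by omega)
    push_cast
    omega

/-- `T_L` maps `S_L` to itself and conserves the total number of balls. -/
theorem stmt_0 (L : ℕ) (hL : 1 ≤ L) (η : ℕ → ℤ) (hη : mem_S L 0 η) :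
    mem_S L 0 (evol L η) ∧
    (∀ j, 0 ≤ evol L η j ∧ evol L η j ≤ L) ∧
    evol L η 0 = 0 ∧
    (∃ N : ℕ, ∀ j, N ≤ j → evol L η j = 0) ∧
    (∀ i : ℕ, ∑ j ∈ Finset.range (i + 2), evol L η j ≤
      ∑ j ∈ Finset.range (i + 1), ((L : ℤ) - evol L η j)) ∧
    (∑' j : ℕ, evol L η j) = ∑' j : ℕ, η j := by
  obtain ⟨⟨N, hN⟩, hb, h00, -, -, hs⟩ := hη
  have hp : ∀ j, 0 ≤ η j := fun j => by have := (hb j).1; omega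
  have hq : ∀ j, η j ≤ L := fun j => by have := (hb j).2; omega
  have hu := carrier_nonneg L η hp
  have hT : ∀ j, 0 ≤ evol L η j ∧ evol L η j ≤ L := by
    intro j
    have := hp j
    have := hq j
    have := hu j
    unfold evol
    omega
  have hT0 : evol L η 0 = 0 := by
    have h : carrier (L : ℤ) η 0 = 0 := rfl
    have := hq 0
    unfold evol
    omega
  have hc : ∀ j, N + (carrier L η N).toNat ≤ j → carrier (L : ℤ) η j = 0 := by
    intro j hj
    have h := carrier_tail L (by exact_mod_cast hL) η hp N hN (j - N)
    rw [show N + (j - N) = j by omega] at h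
    have := hu j
    omega
  have hz : ∀ j, N + (carrier L η N).toNat ≤ j → evol L η j = 0 := by
    intro j hj
    have := hc j hj
    have := hq j
    unfold evol
    omega
  have hsum : ∀ i : ℕ, ∑ j ∈ Finset.range (i + 2), evol L η j ≤
      ∑ j ∈ Finset.range (i + 1), ((L : ℤ) - evol L η j) := by
    intro i
    have h1 := hs i
    have h2 := carrier_sum L η (i + 1)
    have h3 : evol L η (i + 1) ≤ carrier L η (i + 1) := min_le_right _ _
    have h4 := hp (i + 1)
    have h5 := hu (i + 1)
    rw [Finset.sum_range_succ, Finset.sum_sub_distrib] at h1 ⊢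
    linarith
  refine ⟨⟨⟨_, hz⟩, ?_, hT0.le, ?_, ⟨0, ?_⟩, hsum⟩, hT, hT0, ⟨_, hz⟩, hsum, ?_⟩
  · intro j
    have := hT j
    omega
  · intro j
    have := hT j
    omega
  · rw [hT0]
    omega
  · rw [tsum_eq_sum (s := Finset.range (N + (carrier L η N).toNat)),
      tsum_eq_sum (s := Finset.range (N + (carrier L η N).toNat))]
    · have := carrier_sum L η (N + (carrier L η N).toNat)
      rw [hc _ le_rfl] at this
      linarith
    · intro j hj
      exact hN j (by simp at hj; omega)
    · intro j hj
      exact hz j (by simpa using hj)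
end

section
/- (Theorem 2.2) Let η ∈ S_{L,M} with carrier u, and let J(η) = {j ∈ ℕ | η_j + u_j ≥ L}. Then for every subset I ⊆ J(η), T_1^M(r_I(η)) = l_I(T_L(η)), where the words of l_I(T_L(η)) are formed with the shifted values (T_L(η))_j + M. -/
namespace BBS

attribute [local instance] Classical.propDecidable

end BBS

open BBS

attribute [local instance] Classical.propDecidable in
theorem aux_inner (L M : ℕ) (η : ℕ → ℤ) (hb : ∀ j, -(M:ℤ) ≤ η j ∧ η j ≤ L + M)
    (I : Set ℕ) (w : ℕ → ℤ) (hw : w = rSeq L M I η) (j : ℕ) (u : ℤ) (hu : -(M:ℤ) ≤ u)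
    (hI : j ∈ I → (L : ℤ) ≤ η j + u)
    (h0 : carrierM 1 M w ((L + 2 * M) * j) = u + M) (k : ℕ) (hk : k ≤ L + 2 * M) :
    (j ∈ I → carrierM 1 M w ((L + 2 * M) * j + k) =
      if (k : ℤ) ≤ η j + M then u + M + k else u + M + 2 * (η j + M) - k) ∧
    (j ∉ I → carrierM 1 M w ((L + 2 * M) * j + k) =
      if (k : ℤ) ≤ L + M - η j then max 0 (u + M - k)
      else max 0 (η j + u - L) + k - (L + M - η j)) := by
  have hbj := hb j
  induction k with
  | zero =>
    constructor
    · intro _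
      rw [Nat.add_zero, h0, if_pos (by push_cast; omega)]; simp
    · intro _
      rw [Nat.add_zero, h0, if_pos (by push_cast; omega)]; push_cast; omega
  | succ k ih =>
    have ih := ih (by omega)
    have hd : ((L + 2 * M) * j + k) / (L + 2 * M) = j := by
      rw [Nat.mul_add_div (by omega), Nat.div_eq_of_lt (by omega)]; omega
    have hm : ((L + 2 * M) * j + k) % (L + 2 * M) = k := by
      rw [Nat.mul_add_mod, Nat.mod_eq_of_lt (by omega)]
    have hwk : w ((L + 2 * M) * j + k) = if (j ∈ I ∧ (k : ℤ) < η j + M) ∨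
        (j ∉ I ∧ (L : ℤ) + 2 * M - (η j + M) ≤ (k : ℤ)) then 1 else 0 := by
      rw [hw, rSeq, hd, hm]
    rw [← Nat.add_assoc]
    simp only [carrierM]
    constructor
    · intro hj
      have h1 := ih.1 hj
      have h2 := hI hj
      simp only [hj, true_and, not_true, false_and, or_false] at hwk
      rw [hwk, h1]
      push_cast
      split_ifs <;> omega
    · intro hj
      have h1 := ih.2 hj
      simp only [hj, true_and, not_false_iff, false_and, false_or] at hwk
      rw [hwk, h1]
      push_cast
      split_ifs <;> omega

/-- Theorem 2.2: for every subset `I` of `J(η)`,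
`T_1^M(r_I(η)) = l_I(T_L(η))`. -/
theorem stmt_3 (L M : ℕ) (hL : 1 ≤ L) (η : ℕ → ℤ) (hη : mem_S L M η)
    (I : Set ℕ) (hI : I ⊆ {j : ℕ | (L : ℤ) ≤ η j + carrier L η j}) :
    evolOne M (rSeq L M I η) = lSeq L M I (evol L η) := by
  have hb := hη.2.1
  have hu : ∀ j, -(M:ℤ) ≤ carrier L η j := by
    intro j
    cases j with
    | zero => simp [carrier, carrierM]
    | succ j =>
      have := hb j
      simp only [carrier, carrierM]
      omega
  have hI' : ∀ j, j ∈ I → (L : ℤ) ≤ η j + carrier L η j := fun j hj => hI hj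
  have hv : ∀ j, carrierM 1 M (rSeq L M I η) ((L + 2 * M) * j) = carrier L η j + M := by
    intro j
    induction j with
    | zero => simp [carrier, carrierM]
    | succ j ih =>
      have h := aux_inner L M η hb I _ rfl j _ (hu j) (hI' j) ih (L + 2 * M) le_rfl
      have hc : carrier L η (j + 1) = η j + max 0 (η j + carrier L η j - L) := rfl
      have hbj := hb j
      have huj := hu j
      rw [Nat.mul_succ, hc]
      by_cases hj : j ∈ I
      · have h2 := hI' j hj
        rw [h.1 hj]
        push_cast
        split_ifs <;> omega
      · rw [h.2 hj]
        push_cast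
        split_ifs <;> omega
  funext n
  have hn : (L + 2 * M) * (n / (L + 2 * M)) + n % (L + 2 * M) = n := Nat.div_add_mod _ _
  have hlt : n % (L + 2 * M) < L + 2 * M := Nat.mod_lt _ (by omega)
  have h := aux_inner L M η hb I _ rfl (n / (L + 2 * M)) _ (hu _) (hI' _) (hv _)
    (n % (L + 2 * M)) hlt.le
  rw [hn] at h
  have hbj := hb (n / (L + 2 * M))
  have huj := hu (n / (L + 2 * M))
  have hIj := hI' (n / (L + 2 * M))
  simp only [evolOne]
  by_cases hj : n / (L + 2 * M) ∈ I
  · have h2 := hIj hj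
    rw [h.1 hj]
    simp only [rSeq, lSeq, evol, hj, true_and, not_true, false_and, or_false]
    generalize n % (L + 2 * M) = k at *
    split_ifs <;> omega
  · rw [h.2 hj]
    simp only [rSeq, lSeq, evol, hj, true_and, not_false_iff, false_and, false_or]
    generalize n % (L + 2 * M) = k at *
    split_ifs <;> omega
end

section
/- Let η ∈ S_{L,M} with carrier u, set J(η) = {j ∈ ℕ | η_j + u_j ≥ L}, let x satisfy η_j = 0 and u_j(η) = 0 for all j ≥ x, let ū be the backward carrier of T_L(η) computed from x, and set J′(T_L(η)) = {j ∈ ℕ | (T_L(η))_j + ū_{j+1} ≥ L}. Then η_j + u_j = (T_L(η))_j + u_{j+1} for every j, and J(η) = J′(T_L(η)). -/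
namespace BBS

attribute [local instance] Classical.propDecidable

end BBS

open BBS

theorem conserve_aux (L : ℤ) (η : ℕ → ℤ) (j : ℕ) :
    η j + carrier L η j = evol L η j + carrier L η (j + 1) := by
  have h : carrier L η (j + 1) = η j + max 0 (η j + carrier L η j - L) := rfl
  rw [h]; unfold evol; omega

theorem backAux_eq_aux (L : ℤ) (η : ℕ → ℤ) (x : ℕ) (hx : carrier L η x = 0) (n : ℕ)
    (hn : n ≤ x) : backAux L (evol L η) x n = carrier L η (x - n) := by
  induction n with
  | zero => simp [backAux, hx]
  | succ n ih =>
    have ih := ih (by omega)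
    obtain ⟨k, hk⟩ : ∃ k, x - n = k + 1 := ⟨x - n - 1, by omega⟩
    have hk2 : x - (n + 1) = k := by omega
    have h : carrier L η (k + 1) = η k + max 0 (η k + carrier L η k - L) := rfl
    rw [hk] at ih
    simp only [backAux]
    rw [ih, hk, hk2, h, Nat.add_sub_cancel]
    unfold evol; omega

theorem backCarrier_eq_aux (L : ℤ) (η : ℕ → ℤ) (x : ℕ)
    (hx : ∀ j, x ≤ j → carrier L η j = 0) (j : ℕ) :
    backCarrier L (evol L η) x j = carrier L η j := by
  unfold backCarrier
  split_ifs with h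
  · exact (hx j h).symm
  · rw [backAux_eq_aux L η x (hx x le_rfl) _ (by omega)]
    congr 1; omega

/-- `η_j + u_j = (T_L η)_j + u_{j+1}` and `J(η) = J′(T_L(η))`. -/
theorem stmt_4 (L M : ℕ) (hL : 1 ≤ L) (η : ℕ → ℤ) (hη : mem_S L M η)
    (x : ℕ) (hx : ∀ j, x ≤ j → η j = 0 ∧ carrier L η j = 0) :
    (∀ j, η j + carrier L η j = evol L η j + carrier L η (j + 1)) ∧
    {j : ℕ | (L : ℤ) ≤ η j + carrier L η j} =
      {j : ℕ | (L : ℤ) ≤ evol L η j + backCarrier L (evol L η) x (j + 1)} := by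
  refine ⟨conserve_aux L η, ?_⟩
  ext j
  simp only [Set.mem_setOf_eq]
  rw [backCarrier_eq_aux L η x (fun j hj => (hx j hj).2), ← conserve_aux]
end

section
/- (Lemma 2.8) For every η ∈ S_{L,M}, T_1^M(bin(η)) = bin′(T_L(η)). -/
namespace BBS

attribute [local instance] Classical.propDecidable

end BBS

open BBS

namespace BBS

lemma carrier_succ (L : ℤ) (η : ℕ → ℤ) (j : ℕ) :
    carrier L η (j + 1) = η j + max 0 (η j + carrier L η j - L) := rfl

lemma flag_succ (L : ℤ) (η : ℕ → ℤ) (j : ℕ) :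
    flag L η (j + 1) = if η j + η (j + 1) < L then 0
      else if η j + η (j + 1) = L then flag L η j else 1 := by
  simp only [flag]

lemma flag'_zero (L : ℤ) (η : ℕ → ℤ) :
    flag' L η 0 = if η 0 + η 1 < L then 0 else if η 0 + η 1 = L then 0 else 1 := by
  simp only [flag']

lemma flag'_succ (L : ℤ) (η : ℕ → ℤ) (j : ℕ) :
    flag' L η (j + 1) = if η (j + 1) + η (j + 2) < L then 0
      else if η (j + 1) + η (j + 2) = L then flag' L η j else 1 := by
  simp only [flag']

lemma flag_cases (L : ℤ) (η : ℕ → ℤ) (j : ℕ) : flag L η j = 0 ∨ flag L η j = 1 := by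
  induction j with
  | zero => left; simp only [flag]
  | succ j ih => rw [flag_succ]; split_ifs <;> simp [ih]

lemma flag'_cases (L : ℤ) (η : ℕ → ℤ) (j : ℕ) : flag' L η j = 0 ∨ flag' L η j = 1 := by
  induction j with
  | zero => rw [flag'_zero]; split_ifs <;> simp
  | succ j ih => rw [flag'_succ]; split_ifs <;> simp [ih]

/-- A flagged box overflows the carrier. -/
lemma overflow_of_flag (L : ℤ) (η : ℕ → ℤ) (j : ℕ) (h : flag L η j = 1) :
    L < carrier L η j + η j := by
  induction j with
  | zero => simp [flag] at h
  | succ j ih =>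
    rw [flag_succ] at h
    rw [carrier_succ]
    split_ifs at h with h1 h2
    · omega
    · have := ih h
      omega
    · omega

lemma flag'_of_flag (L : ℤ) (η : ℕ → ℤ) (j : ℕ) (h : flag L η (j + 1) = 1) :
    flag' L (evol L η) j = 0 := by
  induction j with
  | zero =>
    have ho := overflow_of_flag L η _ h
    rw [flag_succ] at h
    rw [flag'_zero]
    have h0 : flag L η 0 = 0 := by simp only [flag]
    simp only [evol]
    simp only [zero_add] at *
    split_ifs at h ⊢ <;> omega
  | succ j ih =>
    have ho := overflow_of_flag L η _ h
    rw [flag_succ] at h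
    rw [flag'_succ]
    simp only [evol] at *
    have e : j + 1 + 1 = j + 2 := rfl
    simp only [e] at *
    split_ifs at h with h1 h2
    · omega
    · have := ih h
      split_ifs <;> omega
    · split_ifs <;> omega

lemma flag'_of_overflow (L : ℤ) (hL : 0 ≤ L) (η : ℕ → ℤ) (h0 : η 0 ≤ 0) (j : ℕ)
    (ho : L < carrier L η j + η j) (hf : flag L η j = 0) :
    ∃ k, j = k + 1 ∧ flag' L (evol L η) k = 1 := by
  induction j with
  | zero => simp [carrier, carrierM] at ho; omega
  | succ j ih =>
    refine ⟨j, rfl, ?_⟩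
    have hu := carrier_succ L η j
    rw [flag_succ] at hf
    have hle : η j + η (j + 1) ≤ L := by
      split_ifs at hf <;> omega
    have ho' : L < carrier L η j + η j := by omega
    have hj : evol L η j = L - η j := by simp only [evol]; omega
    have hj1 : evol L η (j + 1) = L - η (j + 1) := by simp only [evol]; omega
    by_cases heq : η j + η (j + 1) = L
    · have hfj : flag L η j = 0 := by simpa [heq] using hf
      obtain ⟨k, rfl, hk⟩ := ih ho' hfj
      rw [flag'_succ]
      rw [show k + 2 = k + 1 + 1 from rfl, hj, hj1]
      split_ifs <;> omega
    · cases j with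
      | zero =>
        rw [flag'_zero, hj, show (1 : ℕ) = 0 + 1 from rfl, hj1]
        split_ifs <;> omega
      | succ k =>
        rw [flag'_succ, show k + 2 = k + 1 + 1 from rfl, hj, hj1]
        split_ifs <;> omega

lemma Iset_eq (L : ℤ) (hL : 0 ≤ L) (η : ℕ → ℤ) (h0 : η 0 ≤ 0) :
    Iset' L (evol L η) = Iset L η := by
  ext j
  simp only [Iset, Iset', Set.mem_setOf_eq]
  have hu := carrier_succ L η j
  constructor
  · rintro ⟨h1, h2⟩
    have hgt : L < evol L η j + evol L η (j + 1) := by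
      cases j with
      | zero =>
        rw [flag'_zero] at h2
        simp only [zero_add]
        split_ifs at h2 <;> omega
      | succ k =>
        have := h1 k rfl
        rw [flag'_succ] at h2
        rw [show k + 1 + 1 = k + 2 from rfl]
        split_ifs at h2 <;> omega
    have ho : L < carrier L η j + η j := by
      simp only [evol] at hgt
      omega
    constructor
    · rcases flag_cases L η j with h | h
      · obtain ⟨k, rfl, hk⟩ := flag'_of_overflow L hL η h0 j ho h
        have := h1 k rfl
        omega
      · exact h
    · rcases flag_cases L η (j + 1) with h | h
      · exact h
      · have := flag'_of_flag L η j h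
        omega
  · rintro ⟨h1, h2⟩
    have ho := overflow_of_flag L η j h1
    constructor
    · rintro k rfl
      exact flag'_of_flag L η k h1
    · rw [flag_succ] at h2
      have hlt : η j + η (j + 1) < L := by
        split_ifs at h2 <;> omega
      have hgt : L < evol L η j + evol L η (j + 1) := by
        simp only [evol]; omega
      cases j with
      | zero =>
        rw [flag'_zero]
        simp only [zero_add] at hgt
        split_ifs <;> omega
      | succ k =>
        rw [flag'_succ]
        rw [show k + 1 + 1 = k + 2 from rfl] at hgt
        split_ifs <;> omega

lemma rSeq_block (L M : ℕ) (K : Set ℕ) (η : ℕ → ℤ) (j i : ℕ) (hi : i < L + 2 * M) :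
    ((L + 2 * M) * j + i) / (L + 2 * M) = j ∧ ((L + 2 * M) * j + i) % (L + 2 * M) = i := by
  constructor
  · rw [Nat.mul_add_div (by omega), Nat.div_eq_of_lt hi, add_zero]
  · rw [Nat.mul_add_mod, Nat.mod_eq_of_lt hi]

/-- Carrier within a block of the form `0^*1^*`. -/
lemma block_out (L M : ℕ) (K : Set ℕ) (η : ℕ → ℤ) (j : ℕ) (v : ℤ) (hv : 0 ≤ v)
    (hb : -(M : ℤ) ≤ η j ∧ η j ≤ L + M) (hK : j ∉ K)
    (h : carrierM 1 M (rSeq L M K η) ((L + 2 * M) * j) = v) (i : ℕ) (hi : i ≤ L + 2 * M) :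
    carrierM 1 M (rSeq L M K η) ((L + 2 * M) * j + i) =
      if (i : ℤ) ≤ L + M - η j then max 0 (v - i)
      else max 0 (v - (L + M - η j)) + (i - (L + M - η j)) := by
  induction i with
  | zero => rw [add_zero, h, if_pos (by push_cast; omega)]; push_cast; omega
  | succ i ih =>
    have ih := ih (by omega)
    obtain ⟨hd, hm⟩ := rSeq_block L M K η j i (by omega)
    have hw : rSeq L M K η ((L + 2 * M) * j + i) = if (L : ℤ) + M - η j ≤ i then 1 else 0 := by
      simp only [rSeq, hd, hm, hK, false_and, not_false_eq_true, true_and, false_or]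
      exact if_congr (by omega) rfl rfl
    rw [← add_assoc, carrierM, ih, hw]
    push_cast
    split_ifs <;> omega

/-- Carrier within a block of the form `1^*0^*`. -/
lemma block_in (L M : ℕ) (K : Set ℕ) (η : ℕ → ℤ) (j : ℕ) (v : ℤ)
    (hb : -(M : ℤ) ≤ η j ∧ η j ≤ L + M) (hv : 0 ≤ v) (hv' : (L : ℤ) - η j + M ≤ v) (hK : j ∈ K)
    (h : carrierM 1 M (rSeq L M K η) ((L + 2 * M) * j) = v) (i : ℕ) (hi : i ≤ L + 2 * M) :
    carrierM 1 M (rSeq L M K η) ((L + 2 * M) * j + i) =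
      if (i : ℤ) ≤ η j + M then v + i else v + 2 * (η j + M) - i := by
  induction i with
  | zero => rw [add_zero, h, if_pos (by push_cast; omega)]; push_cast; omega
  | succ i ih =>
    have ih := ih (by omega)
    obtain ⟨hd, hm⟩ := rSeq_block L M K η j i (by omega)
    have hw : rSeq L M K η ((L + 2 * M) * j + i) = if (i : ℤ) < η j + M then 1 else 0 := by
      simp only [rSeq, hd, hm, hK, true_and, not_true_eq_false, false_and, or_false]
    rw [← add_assoc, carrierM, ih, hw]
    push_cast
    split_ifs <;> omega

lemma carrier_lower (L M : ℕ) (η : ℕ → ℤ) (hb : ∀ j, -(M : ℤ) ≤ η j ∧ η j ≤ L + M) (j : ℕ) :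
    -(M : ℤ) ≤ carrier L η j := by
  cases j with
  | zero => simp [carrier, carrierM]
  | succ j => rw [carrier_succ]; have := hb j; omega

lemma block_start (L M : ℕ) (η : ℕ → ℤ) (hb : ∀ j, -(M : ℤ) ≤ η j ∧ η j ≤ L + M) (j : ℕ) :
    carrierM 1 M (rSeq L M (Iset L η) η) ((L + 2 * M) * j) = carrier L η j + M := by
  induction j with
  | zero => simp [carrier, carrierM]
  | succ j ih =>
    have hl := carrier_lower L M η hb j
    rw [Nat.mul_succ, carrier_succ]
    have hj := hb j
    by_cases hK : j ∈ Iset L η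
    · have ho := overflow_of_flag L η j hK.1
      rw [block_in L M _ η j _ hj (by omega) (by omega) hK ih _ le_rfl]
      push_cast
      split_ifs <;> omega
    · rw [block_out L M _ η j _ (by omega) hj hK ih _ le_rfl]
      push_cast
      split_ifs <;> omega

end BBS

/-- Lemma 2.8: `T_1^M(bin(η)) = bin′(T_L(η))`. -/
theorem stmt_6 (L M : ℕ) (hL : 1 ≤ L) (η : ℕ → ℤ) (hη : mem_S L M η) :
    evolOne M (rSeq L M (Iset L η) η) =
      lSeq L M (Iset' L (evol L η)) (evol L η) := by
  obtain ⟨-, hb, h0, -, -, -⟩ := hη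
  rw [Iset_eq L (by omega) η h0]
  funext n
  obtain ⟨j, i, hi, rfl⟩ : ∃ j i, i < L + 2 * M ∧ n = (L + 2 * M) * j + i :=
    ⟨n / (L + 2 * M), n % (L + 2 * M), Nat.mod_lt _ (by omega), (Nat.div_add_mod _ _).symm⟩
  have hs := block_start L M η hb j
  have hl := carrier_lower L M η hb j
  have hj := hb j
  obtain ⟨hd, hm⟩ := rSeq_block L M (Iset L η) η j i hi
  by_cases hK : j ∈ Iset L η
  · have ho := overflow_of_flag L η j hK.1
    have hc := block_in L M _ η j _ hj (by omega) (by omega) hK hs i hi.le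
    simp only [evolOne, hc]
    simp only [rSeq, lSeq, hd, hm, hK, true_and, not_true_eq_false, false_and, or_false]
    simp only [evol]
    split_ifs <;> omega
  · have hc := block_out L M _ η j _ (by omega) hj hK hs i hi.le
    simp only [evolOne, hc]
    simp only [rSeq, lSeq, hd, hm, hK, false_and, not_false_eq_true, true_and, false_or]
    simp only [evol]
    split_ifs <;> omega
end

section
/- (Lemma 2.10) For every binary sequence w : ℕ → {0,1} with finitely many 1s, the 10-arc pairing of w coincides, as a set of pairs of positions, with the 01-arc pairing of T_1(w). -/
namespace BBS

attribute [local instance] Classical.propDecidable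

end BBS

namespace BBS

/-- Balanced segment `[i,j)`. -/
inductive Bal (a b : ℤ) (w : ℕ → ℤ) : ℕ → ℕ → Prop
  | nil (i : ℕ) : Bal a b w i i
  | cons (i j k : ℕ) : w i = a → Bal a b w (i + 1) j → w j = b → Bal a b w (j + 1) k →
      Bal a b w i k

def Arc (a b : ℤ) (w : ℕ → ℤ) (i j : ℕ) : Prop := w i = a ∧ w j = b ∧ Bal a b w (i + 1) j

/-- Height function. -/
def ht (a b : ℤ) (w : ℕ → ℤ) : ℕ → ℤ
  | 0 => 0
  | j + 1 => ht a b w j + (if w j = a then 1 else if w j = b then -1 else 0)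

theorem ht_a {a b : ℤ} {w : ℕ → ℤ} {i : ℕ} (h : w i = a) :
    ht a b w (i + 1) = ht a b w i + 1 := by simp [ht, h]

theorem ht_b {a b : ℤ} (hab : a ≠ b) {w : ℕ → ℤ} {i : ℕ} (h : w i = b) :
    ht a b w (i + 1) = ht a b w i - 1 := by
  simp [ht, h, hab.symm]; ring

theorem Bal.le {a b : ℤ} {w : ℕ → ℤ} {i j : ℕ} (h : Bal a b w i j) : i ≤ j := by
  induction h with
  | nil i => exact le_rfl
  | cons i j k h1 h2 h3 h4 ih1 ih2 => omega

theorem Bal.trans {a b : ℤ} {w : ℕ → ℤ} {i j k : ℕ} (h : Bal a b w i j)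
    (h' : Bal a b w j k) : Bal a b w i k := by
  induction h with
  | nil i => exact h'
  | cons i j l h1 h2 h3 h4 ih1 ih2 => exact Bal.cons i j k h1 h2 h3 (ih2 h')

theorem Bal.ht {a b : ℤ} (hab : a ≠ b) {w : ℕ → ℤ} {i j : ℕ} (h : Bal a b w i j) :
    ht a b w i = ht a b w j ∧ ∀ m, i ≤ m → m ≤ j → BBS.ht a b w i ≤ BBS.ht a b w m := by
  induction h with
  | nil i =>
    refine ⟨rfl, fun m h1 h2 => ?_⟩
    obtain rfl : i = m := by omega
    exact le_rfl
  | cons i j k h1 h2 h3 h4 ih1 ih2 =>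
    have e1 := ht_a (b := b) h1
    have e2 := ht_b hab h3
    refine ⟨by linarith [ih1.1, ih2.1], fun m hm1 hm2 => ?_⟩
    rcases Nat.eq_or_lt_of_le hm1 with rfl | hm
    · exact le_rfl
    · by_cases hj : m ≤ j
      · linarith [ih1.2 m hm hj]
      · linarith [ih1.1, ih2.2 m (by omega) hm2]

theorem Bal.cover {a b : ℤ} {w : ℕ → ℤ} {i j : ℕ} (h : Bal a b w i j) :
    ∀ m, i ≤ m → m < j → ∃ x y, Arc a b w x y ∧ i ≤ x ∧ x < y ∧ y < j ∧ (m = x ∨ m = y) := by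
  induction h with
  | nil i => intro m h1 h2; omega
  | cons i j k h1 h2 h3 h4 ih1 ih2 =>
    intro m hm1 hm2
    have l2 := h2.le
    have l4 := h4.le
    by_cases e1 : m = i
    · exact ⟨i, j, ⟨h1, h3, h2⟩, le_rfl, by omega, by omega, Or.inl e1⟩
    by_cases e2 : m = j
    · exact ⟨i, j, ⟨h1, h3, h2⟩, le_rfl, by omega, by omega, Or.inr e2⟩
    by_cases e3 : m < j
    · obtain ⟨x, y, hA, q1, q2, q3, q4⟩ := ih1 m (by omega) e3
      exact ⟨x, y, hA, by omega, q2, by omega, q4⟩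
    · obtain ⟨x, y, hA, q1, q2, q3, q4⟩ := ih2 m (by omega) hm2
      exact ⟨x, y, hA, by omega, q2, by omega, q4⟩

theorem Arc.lt {a b : ℤ} {w : ℕ → ℤ} {i j : ℕ} (h : Arc a b w i j) : i < j := h.2.2.le

theorem Arc.right_le {a b : ℤ} (hab : a ≠ b) {w : ℕ → ℤ} {i j j' : ℕ} (h : Arc a b w i j)
    (h' : Arc a b w i j') : j' ≤ j := by
  by_contra hlt
  have l := h.lt
  have e1 := (h.2.2.ht hab).1
  have e2 := (h'.2.2.ht hab).2 (j + 1) (by omega) (by omega)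
  have e3 := ht_b hab h.2.1
  omega

theorem Arc.left_le {a b : ℤ} (hab : a ≠ b) {w : ℕ → ℤ} {i i' j : ℕ} (h : Arc a b w i j)
    (h' : Arc a b w i' j) : i' ≤ i := by
  by_contra hlt
  have l := h'.lt
  have e1 := (h.2.2.ht hab).1
  have e0 := (h'.2.2.ht hab).1
  have e2 := (h.2.2.ht hab).2 i' (by omega) (by omega)
  have e3 := ht_a (b := b) h'.1
  omega

theorem stage_mono {a b : ℤ} {w : ℕ → ℤ} {k : ℕ} {p : ℕ × ℕ} (h : p ∈ arcStage a b w k) :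
    p ∈ arcStage a b w (k + 1) := Or.inl h

theorem stage_sound {a b : ℤ} (hab : a ≠ b) (w : ℕ → ℤ) (k : ℕ) :
    ∀ p ∈ arcStage a b w k, Arc a b w p.1 p.2 ∧
      ∀ m, p.1 < m → m < p.2 → ∃ q ∈ arcStage a b w k, m = q.1 ∨ m = q.2 := by
  induction k with
  | zero => intro p hp; exact hp.elim
  | succ k ih =>
    intro p hp
    rcases hp with hp | ⟨hlt, h1, h2, hfree, hcov⟩
    · refine ⟨(ih p hp).1, fun m m1 m2 => ?_⟩
      obtain ⟨q, hq, h⟩ := (ih p hp).2 m m1 m2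
      exact ⟨q, stage_mono hq, h⟩
    refine ⟨⟨h1, h2, ?_⟩, fun m m1 m2 => ?_⟩
    swap
    · obtain ⟨q, hq, h⟩ := hcov m m1 m2
      exact ⟨q, stage_mono hq, h⟩
    have key : ∀ n x, p.2 - x = n → x ≤ p.2 → Bal a b w (p.1 + 1) x →
        Bal a b w (p.1 + 1) p.2 := by
      intro n
      induction n using Nat.strong_induction_on with
      | _ n ihn =>
        intro x hn hx hB
        have hBl := hB.le
        rcases Nat.eq_or_lt_of_le hx with rfl | hx
        · exact hB
        obtain ⟨q, hq, hor⟩ := hcov x (by omega) hx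
        obtain ⟨hA, hqc⟩ := ih q hq
        have hl := hA.lt
        obtain ⟨f1, f2, f3, f4⟩ := hfree q hq
        rcases hor with rfl | rfl
        · have hq2 : q.2 < p.2 := by
            by_contra hc
            obtain ⟨r, hr, hr'⟩ := hqc p.2 hx (by omega)
            obtain ⟨g1, g2, g3, g4⟩ := hfree r hr
            rcases hr' with h | h
            · exact g3 h
            · exact g4 h
          refine ihn (p.2 - (q.2 + 1)) (by omega) (q.2 + 1) rfl (by omega) ?_
          exact hB.trans (Bal.cons _ _ _ hA.1 hA.2.2 hA.2.1 (Bal.nil _))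
        · exfalso
          have hq1 : p.1 < q.1 := by
            by_contra hc
            obtain ⟨r, hr, hr'⟩ := hqc p.1 (by omega) (by omega)
            obtain ⟨g1, g2, g3, g4⟩ := hfree r hr
            rcases hr' with h | h
            · exact g1 h
            · exact g2 h
          have e1 := (hB.ht hab).1
          have e2 := (hB.ht hab).2 q.1 (by omega) (by omega)
          have e3 := (hA.2.2.ht hab).1
          have e4 := ht_a (b := b) hA.1
          omega
    exact key _ (p.1 + 1) rfl hlt (Bal.nil _)

theorem stage_complete {a b : ℤ} (hab : a ≠ b) (w : ℕ → ℤ) (n : ℕ) :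
    ∀ i j, j - i ≤ n → Arc a b w i j → (i, j) ∈ arcStage a b w n := by
  induction n with
  | zero => intro i j h hA; have := hA.lt; omega
  | succ n ih =>
    intro i j h hA
    by_cases hin : (i, j) ∈ arcStage a b w n
    · exact stage_mono hin
    refine Or.inr ⟨hA.lt, hA.1, hA.2.1, ?_, ?_⟩
    · rintro ⟨x, y⟩ hq
      have hA' : Arc a b w x y := (stage_sound hab w n _ hq).1
      refine ⟨?_, ?_, ?_, ?_⟩
      · rintro rfl
        have := le_antisymm (Arc.right_le hab hA hA') (Arc.right_le hab hA' hA)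
        subst this
        exact hin hq
      · rintro rfl
        exact hab (hA.1.symm.trans hA'.2.1)
      · rintro rfl
        exact hab (hA'.1.symm.trans hA.2.1)
      · rintro rfl
        have := le_antisymm (Arc.left_le hab hA hA') (Arc.left_le hab hA' hA)
        subst this
        exact hin hq
    · intro m m1 m2
      obtain ⟨x, y, hq, q1, q2, q3, q4⟩ := hA.2.2.cover m m1 m2
      exact ⟨(x, y), ih x y (by simp only at *; omega) hq, q4⟩

theorem mem_arcPairing {a b : ℤ} (hab : a ≠ b) (w : ℕ → ℤ) (p : ℕ × ℕ) :
    p ∈ arcPairing a b w ↔ Arc a b w p.1 p.2 := by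
  unfold arcPairing
  rw [Set.mem_iUnion]
  constructor
  · rintro ⟨k, hk⟩
    exact (stage_sound hab w k p hk).1
  · intro h
    exact ⟨_, stage_complete hab w _ p.1 p.2 le_rfl h⟩

theorem car_nonneg (w : ℕ → ℤ) (hw : ∀ n, w n = 0 ∨ w n = 1) (j : ℕ) :
    0 ≤ carrierM 1 0 w j := by
  cases j with
  | zero => simp [carrierM]
  | succ j =>
    simp only [carrierM]
    rcases hw j with h | h <;> rw [h] <;> positivity

theorem car_one (w : ℕ → ℤ) (hw : ∀ n, w n = 0 ∨ w n = 1) {j : ℕ} (h : w j = 1) :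
    carrierM 1 0 w (j + 1) = carrierM 1 0 w j + 1 := by
  have := car_nonneg w hw j
  simp only [carrierM, h]
  omega

theorem car_zero (w : ℕ → ℤ) {j : ℕ} (h : w j = 0) :
    carrierM 1 0 w (j + 1) = max 0 (carrierM 1 0 w j - 1) := by
  simp only [carrierM, h]
  omega

theorem bal_fwd (w : ℕ → ℤ) (hw : ∀ n, w n = 0 ∨ w n = 1) {i j : ℕ} (h : Bal 1 0 w i j) :
    carrierM 1 0 w i = carrierM 1 0 w j ∧ Bal 0 1 (evolOne 0 w) i j := by
  induction h with
  | nil i => exact ⟨rfl, Bal.nil _⟩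
  | cons i j k h1 h2 h3 h4 ih1 ih2 =>
    have n := car_nonneg w hw i
    have c1 := car_one w hw h1
    have c2 := car_zero w h3
    refine ⟨by omega, Bal.cons i j k ?_ ih1.2 ?_ ih2.2⟩
    · unfold evolOne; omega
    · unfold evolOne; omega

theorem arc_back (w : ℕ → ℤ) (hw : ∀ n, w n = 0 ∨ w n = 1) {i j : ℕ}
    (h1 : evolOne 0 w i = 0) (h2 : Bal 1 0 w (i + 1) j) (h3 : evolOne 0 w j = 1) :
    w i = 1 ∧ w j = 0 := by
  unfold evolOne at h1 h3
  have e := (bal_fwd w hw h2).1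
  have hj : w j = 0 := by rcases hw j with h | h <;> omega
  refine ⟨?_, hj⟩
  rcases hw i with h | h
  · have := car_zero w h
    omega
  · exact h

theorem bal_bwd (w : ℕ → ℤ) (hw : ∀ n, w n = 0 ∨ w n = 1) {i j : ℕ}
    (h : Bal 0 1 (evolOne 0 w) i j) : Bal 1 0 w i j := by
  induction h with
  | nil i => exact Bal.nil _
  | cons i j k h1 h2 h3 h4 ih1 ih2 =>
    have := arc_back w hw h1 ih1 h3
    exact Bal.cons i j k this.1 ih1 this.2 ih2

end BBS

open BBS

/-- Lemma 2.10: the 10-arc pairing of `w` coincides with the 01-arc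
pairing of `T_1(w)`. -/
theorem stmt_8 (w : ℕ → ℤ) (hw : ∀ n, w n = 0 ∨ w n = 1)
    (hfin : ∃ N : ℕ, ∀ n, N ≤ n → w n = 0) :
    arcPairing 1 0 w = arcPairing 0 1 (evolOne 0 w) := by
  ext ⟨i, j⟩
  rw [mem_arcPairing one_ne_zero, mem_arcPairing zero_ne_one]
  constructor
  · rintro ⟨h1, h2, h3⟩
    have h := (bal_fwd w hw (Bal.cons i j (j + 1) h1 h3 h2 (Bal.nil _))).1
    have b := bal_fwd w hw h3
    have n := car_nonneg w hw i
    have c1 := car_one w hw h1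
    simp only at *
    refine ⟨?_, ?_, b.2⟩
    · unfold evolOne; omega
    · unfold evolOne; omega
  · rintro ⟨h1, h2, h3⟩
    have b := bal_bwd w hw h3
    have a := arc_back w hw h1 b h2
    exact ⟨a.1, a.2, b⟩
end
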